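/- The set F(X,Ω) of (X,Ω)-decorated planar rooted forests, equipped with concatenation of forests, the grafting operators B_ω (ω ∈ Ω), and the map j_X sending x ∈ X to the single-leaf forest decorated by x, is the free Ω-operated semigroup on X. Precisely: for every semigroup H, every family of maps α_ω : H → H (ω ∈ Ω), and every map f : X → H, there exists a unique semigroup homomorphism φ : F(X,Ω) → H such that φ(j_X(x)) = f(x) for every x ∈ X and φ(B_ω(F)) = α_ω(φ(F)) for every forest F and every ω ∈ Ω. -/

import Mathlib

mutual
  /-- `(X,Ω)`-decorated planar rooted trees: a leaf decorated by `x ∈ X`, or a node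
  decorated by `ω ∈ Ω` with a nonempty finite ordered list of subtrees (a forest). -/
  inductive PTree (X : Type u) (Ω : Type v) : Type (max u v)
    | leaf : X → PTree X Ω
    | node : Ω → PForest X Ω → PTree X Ω

  /-- `(X,Ω)`-decorated planar rooted forests: nonempty finite ordered lists of trees. -/
  inductive PForest (X : Type u) (Ω : Type v) : Type (max u v)
    | single : PTree X Ω → PForest X Ω
    | cons : PTree X Ω → PForest X Ω → PForest X Ω
end

/-- Concatenation of forests. -/
def PForest.mul {X : Type u} {Ω : Type v} : PForest X Ω → PForest X Ω → PForest X Ω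
  | .single t, G => .cons t G
  | .cons t F, G => .cons t (PForest.mul F G)

instance {X : Type u} {Ω : Type v} : Mul (PForest X Ω) := ⟨PForest.mul⟩

theorem PForest.mul_assoc {X : Type u} {Ω : Type v} :
    ∀ a b c : PForest X Ω, a * b * c = a * (b * c)
  | .single _, _, _ => rfl
  | .cons t F, b, c => congrArg (PForest.cons t) (PForest.mul_assoc F b c)

/-- `F(X,Ω)` is a semigroup under concatenation of forests. -/
instance {X : Type u} {Ω : Type v} : Semigroup (PForest X Ω) where
  mul_assoc := PForest.mul_assoc

/-- The grafting operator `B_ω`, sending a forest `(T₁,…,T_b)` to the one-tree forest with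
root decorated by `ω` and ordered subtrees `T₁,…,T_b`. -/
def graft {X : Type u} {Ω : Type v} (ω : Ω) (F : PForest X Ω) : PForest X Ω :=
  .single (.node ω F)

/-- The map `j_X : X → F(X,Ω)` sending `x` to the single-leaf forest decorated by `x`. -/
def jPF {X : Type u} {Ω : Type v} (x : X) : PForest X Ω :=
  .single (.leaf x)

/-!
A forest is obtained from single leaves by grafting and concatenation, so a homomorphism that
intertwines the grafting operators with `α` is determined by its values on leaves. Conversely,
replacing leaves by values of `f`, grafting by `α` and concatenation by multiplication evaluates a
forest as a right-bracketed product over its trees; associativity of the target makes this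
multiplicative.
-/

namespace PForest

variable {X Ω H : Type*}

theorem single_mul (t : PTree X Ω) (F : PForest X Ω) : single t * F = cons t F :=
  rfl

theorem cons_mul (t : PTree X Ω) (F G : PForest X Ω) : cons t F * G = cons t (F * G) :=
  rfl

theorem induction_jPF_graft_mul {p : PForest X Ω → Prop} (h_leaf : ∀ x, p (jPF x))
    (h_graft : ∀ ω F, p F → p (graft ω F)) (h_mul : ∀ F G, p F → p G → p (F * G))
    (F : PForest X Ω) : p F :=
  PForest.rec (motive_1 := fun t => p (single t)) (motive_2 := p)
    h_leaf h_graft (fun _ ht => ht) (fun t F ht hF => h_mul (single t) F ht hF) F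

theorem mulHom_ext [Mul H] {α : Ω → H → H} {φ ψ : PForest X Ω →ₙ* H}
    (hφ : ∀ ω F, φ (graft ω F) = α ω (φ F)) (hψ : ∀ ω F, ψ (graft ω F) = α ω (ψ F))
    (h_leaf : ∀ x, φ (jPF x) = ψ (jPF x)) : φ = ψ := by
  ext F
  induction F using induction_jPF_graft_mul with
  | h_leaf x => exact h_leaf x
  | h_graft ω F ih => rw [hφ, hψ, ih]
  | h_mul F G ihF ihG => rw [map_mul, map_mul, ihF, ihG]

mutual
  /-- The value of a tree in a magma `H` with operators `α`, where a leaf decorated by `x` takes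
  the value `f x`. -/
  def _root_.PTree.eval [Mul H] (α : Ω → H → H) (f : X → H) : PTree X Ω → H
    | .leaf x => f x
    | .node ω F => α ω (eval α f F)

  /-- The value of a forest in a magma `H` with operators `α`: the product of the values of its
  trees, bracketed to the right since `H` need not be associative. -/
  def eval [Mul H] (α : Ω → H → H) (f : X → H) : PForest X Ω → H
    | single t => t.eval α f
    | cons t F => t.eval α f * eval α f F
end

theorem eval_jPF [Mul H] (α : Ω → H → H) (f : X → H) (x : X) : eval α f (jPF x) = f x := by
  rw [jPF, eval, PTree.eval]

theorem eval_graft [Mul H] (α : Ω → H → H) (f : X → H) (ω : Ω) (F : PForest X Ω) :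
    eval α f (graft ω F) = α ω (eval α f F) := by
  rw [graft, eval, PTree.eval]

theorem eval_mul [Semigroup H] (α : Ω → H → H) (f : X → H) :
    ∀ F G : PForest X Ω, eval α f (F * G) = eval α f F * eval α f G
  | single t, G => by rw [single_mul, eval, eval]
  | cons t F, G => by rw [cons_mul, eval, eval, eval_mul α f F G, _root_.mul_assoc]

/-- The homomorphism of operated semigroups induced by `f : X → H`, as a map of the underlying
semigroups. -/
def lift [Semigroup H] (α : Ω → H → H) (f : X → H) : PForest X Ω →ₙ* H where
  toFun := eval α f
  map_mul' := eval_mul α f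

theorem lift_jPF [Semigroup H] (α : Ω → H → H) (f : X → H) (x : X) : lift α f (jPF x) = f x :=
  eval_jPF α f x

theorem lift_graft [Semigroup H] (α : Ω → H → H) (f : X → H) (ω : Ω) (F : PForest X Ω) :
    lift α f (graft ω F) = α ω (lift α f F) :=
  eval_graft α f ω F

end PForest

/-- `(F(X,Ω), concatenation, {B_ω}, j_X)` is the free `Ω`-operated semigroup on `X`:
for every semigroup `H`, family of maps `α_ω : H → H` and map `f : X → H`, there is a
unique semigroup homomorphism `φ : F(X,Ω) → H` with `φ (j_X x) = f x` for all `x ∈ X` and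
`φ (B_ω F) = α_ω (φ F)` for every forest `F` and `ω ∈ Ω`. -/
theorem decoratedForests_free_operated_semigroup
    (X Ω : Type*) [Nonempty X] [Nonempty Ω]
    (H : Type*) [Semigroup H] (α : Ω → H → H) (f : X → H) :
    ∃! φ : PForest X Ω →ₙ* H,
      (∀ x : X, φ (jPF x) = f x) ∧
      ∀ (ω : Ω) (F : PForest X Ω), φ (graft ω F) = α ω (φ F) := by
  refine ⟨PForest.lift α f, ⟨PForest.lift_jPF α f, PForest.lift_graft α f⟩, ?_⟩
  rintro φ ⟨hφ_leaf, hφ_graft⟩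
  exact PForest.mulHom_ext hφ_graft (PForest.lift_graft α f)
    fun x => (hφ_leaf x).trans (PForest.lift_jPF α f x).symm
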